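/- arXiv:1608.08421 — 2 statements merged into one kernel-verified Lean document; each statement's English description precedes it below -/
import Mathlib

section
/- For every natural number n there exist ordinals β₁ <₂ β₂ <₂ ⋯ <₂ βₙ; that is, the structure ℛ₂ contains <₂-chains of every finite length. -/
open FirstOrder

/-- The relation symbols of the language of `ℛ₂`: three binary relations. -/
inductive ordRel : ℕ → Type
  | le : ordRel 2
  | le1 : ordRel 2
  | le2 : ordRel 2

/-- The first-order language with three binary relation symbols `≤`, `≤₁`, `≤₂`. -/
def ordLang : FirstOrder.Language := ⟨fun _ => Empty, ordRel⟩

/-- The `ordLang`-structure on the set of ordinals below `β`, interpreting the three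
relation symbols by `≤` and the given relations `le1`, `le2`. -/
def segStr (le1 le2 : Ordinal → Ordinal → Prop) (β : Ordinal) :
    ordLang.Structure {x : Ordinal // x < β} where
  funMap := fun f => Empty.elim f
  RelMap
    | .le => fun v => (v 0).1 ≤ (v 1).1
    | .le1 => fun v => le1 (v 0).1 (v 1).1
    | .le2 => fun v => le2 (v 0).1 (v 1).1

/-- Σ₁-formulas: a block of existential quantifiers applied to a quantifier-free formula. -/
inductive IsSigma1 {L : FirstOrder.Language} {α : Type} :
    {n : ℕ} → L.BoundedFormula α n → Prop
  | of_isQF {n} {φ : L.BoundedFormula α n} (h : φ.IsQF) : IsSigma1 φ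
  | ex {n} {φ : L.BoundedFormula α (n + 1)} (h : IsSigma1 φ) : IsSigma1 φ.ex

/-- Π₁-formulas: a block of universal quantifiers applied to a quantifier-free formula. -/
inductive IsPi1 {L : FirstOrder.Language} {α : Type} :
    {n : ℕ} → L.BoundedFormula α n → Prop
  | of_isQF {n} {φ : L.BoundedFormula α n} (h : φ.IsQF) : IsPi1 φ
  | all {n} {φ : L.BoundedFormula α (n + 1)} (h : IsPi1 φ) : IsPi1 φ.all

/-- Σ₂-formulas: a block of existential quantifiers applied to a Π₁-formula. -/
inductive IsSigma2 {L : FirstOrder.Language} {α : Type} :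
    {n : ℕ} → L.BoundedFormula α n → Prop
  | of_isPi1 {n} {φ : L.BoundedFormula α n} (h : IsPi1 φ) : IsSigma2 φ
  | ex {n} {φ : L.BoundedFormula α (n + 1)} (h : IsSigma2 φ) : IsSigma2 φ.ex

/-- Realization of a formula with `k` parameters in the segment structure below `β`. -/
def RealizeIn (le1 le2 : Ordinal → Ordinal → Prop) (β : Ordinal) {k : ℕ}
    (φ : ordLang.Formula (Fin k)) (v : Fin k → {x : Ordinal // x < β}) : Prop :=
  letI := segStr le1 le2 β
  φ.Realize v

/-- `a ≤ b` and the segment below `a` is an elementary substructure of the segment below `b`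
with respect to the class `C` of formulas (with parameters from below `a`). -/
def ElemSub (C : ∀ k : ℕ, ordLang.Formula (Fin k) → Prop)
    (le1 le2 : Ordinal → Ordinal → Prop) (a b : Ordinal) : Prop :=
  ∃ hab : a ≤ b,
    ∀ (k : ℕ) (φ : ordLang.Formula (Fin k)), C k φ →
      ∀ v : Fin k → {x : Ordinal // x < a},
        RealizeIn le1 le2 a φ v ↔
          RealizeIn le1 le2 b φ (fun j => ⟨(v j).1, lt_of_lt_of_le (v j).2 hab⟩)

/-- The pair of relations `le1`, `le2` satisfies the simultaneous recursive definition of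
`≤₁` and `≤₂` on the ordinals: `α ≤ᵢ β` iff `α ≤ β` and the segment below `α` is a
Σᵢ-elementary substructure of the segment below `β`. -/
def IsR2Pair (le1 le2 : Ordinal → Ordinal → Prop) : Prop :=
  (∀ a b, le1 a b ↔ ElemSub (fun _ φ => IsSigma1 φ) le1 le2 a b) ∧
  (∀ a b, le2 a b ↔ ElemSub (fun _ φ => IsSigma2 φ) le1 le2 a b)

/-- The strict part of `≤₁`. -/
def Lt1 (le1 : Ordinal → Ordinal → Prop) (a b : Ordinal) : Prop := le1 a b ∧ a ≠ b

/-- The strict part of `≤₂`. -/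
def Lt2 (le2 : Ordinal → Ordinal → Prop) (a b : Ordinal) : Prop := le2 a b ∧ a ≠ b

/-- `1^∞`: the least ordinal `ν` such that below `ν` there are `<₂`-chains of every finite
length. -/
noncomputable def OneInfty (le2 : Ordinal → Ordinal → Prop) : Ordinal :=
  sInf {ν : Ordinal | ∀ n : ℕ, ∃ β : Fin n → Ordinal,
    (∀ i, β i < ν) ∧
    ∀ (i : ℕ) (hi : i + 1 < n), Lt2 le2 (β ⟨i, Nat.lt_of_succ_lt hi⟩) (β ⟨i + 1, hi⟩)}

/-- A respecting forest of order 2: a finite structure with a linear order `≤₀` and partial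
orders `≤₁`, `≤₂` which are forests, with `≤₂ ⊆ ≤₁ ⊆ ≤₀`, and `≤ᵢ₊₁` respecting `≤ᵢ`. -/
structure RForest where
  P : Type
  [fintypeP : Fintype P]
  le0 : P → P → Prop
  le1 : P → P → Prop
  le2 : P → P → Prop
  le0_refl : ∀ p, le0 p p
  le0_trans : ∀ p q r, le0 p q → le0 q r → le0 p r
  le0_antisymm : ∀ p q, le0 p q → le0 q p → p = q
  le0_total : ∀ p q, le0 p q ∨ le0 q p
  le1_refl : ∀ p, le1 p p
  le1_trans : ∀ p q r, le1 p q → le1 q r → le1 p r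
  le1_antisymm : ∀ p q, le1 p q → le1 q p → p = q
  le2_refl : ∀ p, le2 p p
  le2_trans : ∀ p q r, le2 p q → le2 q r → le2 p r
  le2_antisymm : ∀ p q, le2 p q → le2 q p → p = q
  le2_sub_le1 : ∀ p q, le2 p q → le1 p q
  le1_sub_le0 : ∀ p q, le1 p q → le0 p q
  forest1 : ∀ p q r, le1 q p → le1 r p → le1 q r ∨ le1 r q
  forest2 : ∀ p q r, le2 q p → le2 r p → le2 q r ∨ le2 r q
  respects1 : ∀ p q r, le0 p q → le0 q r → le1 p r → le1 p q
  respects2 : ∀ p q r, le1 p q → le1 q r → le2 p r → le2 p q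

attribute [instance] RForest.fintypeP

/-- The finite set `X` of ordinals, with the relations induced from `ℛ₂`, is isomorphic to the
respecting forest `F`. -/
def Realizes (le1 le2 : Ordinal → Ordinal → Prop) (F : RForest) (X : Finset Ordinal) : Prop :=
  ∃ e : F.P ≃ {x // x ∈ X}, ∀ p q : F.P,
    (F.le0 p q ↔ ((e p : Ordinal) ≤ (e q : Ordinal))) ∧
    (F.le1 p q ↔ le1 (e p : Ordinal) (e q : Ordinal)) ∧
    (F.le2 p q ↔ le2 (e p : Ordinal) (e q : Ordinal))

/-- Pointwise comparison of two finite sets of ordinals via their increasing enumerations. -/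
def pwLE (X Y : Finset Ordinal) : Prop :=
  ∃ h : X.card = Y.card, ∀ i : Fin X.card,
    ((X.orderIsoOfFin rfl i : {x // x ∈ X}) : Ordinal) ≤
      ((Y.orderIsoOfFin h.symm i : {x // x ∈ Y}) : Ordinal)

/-- `X` is the isominimal realization of the respecting forest `F` in `ℛ₂`: it is isomorphic
to `F` and pointwise minimal among all finite substructures of `ℛ₂` isomorphic to `F`. -/
def IsIsominimalRealization (le1 le2 : Ordinal → Ordinal → Prop) (F : RForest)
    (X : Finset Ordinal) : Prop :=
  Realizes le1 le2 F X ∧ ∀ Y : Finset Ordinal, Realizes le1 le2 F Y → pwLE X Y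

/-- A covering of the respecting forest `F` into `ℛ₂`. -/
def IsCovering (le1 le2 : Ordinal → Ordinal → Prop) (F : RForest)
    (c : F.P → Ordinal) : Prop :=
  (∀ p q, F.le0 p q ↔ c p ≤ c q) ∧
  (∀ p q, F.le1 p q → le1 (c p) (c q)) ∧
  (∀ p q, F.le2 p q → le2 (c p) (c q))


/-- A covering of the respecting forest `F` into the respecting forest `G`. -/
def ForestCovering (F G : RForest) (f : F.P → G.P) : Prop :=
  (∀ p q, F.le0 p q ↔ G.le0 (f p) (f q)) ∧
  (∀ p q, F.le1 p q → G.le1 (f p) (f q)) ∧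
  (∀ p q, F.le2 p q → G.le2 (f p) (f q))

/-!
For an infinite cardinal `μ` let `δ` be the initial ordinal of `μ⁺`. Each segment `{x | x ≤ a}` of
`δ` has at most `μ` elements, so it can be listed as `F i a` with `i < μ`. Adding the `μ` unary
functions `F i` to the language, the downward Löwenheim–Skolem theorem gives elementary
substructures of `δ` of size `μ` closed under every `F i`, that is, downward closed: they are
ordinals `b < δ` which are elementary in `δ` for all formulas. Such `b` are cofinal in `δ`, so there
are more than `μ` of them, and of any two the smaller is elementary in the larger because both are
elementary in `δ`.
-/

open Cardinal FirstOrder.Language Set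
open Order (succ lt_succ le_succ)

universe u v w x

section LowenheimSkolem

variable {L : FirstOrder.Language.{u, v}} {M : Type w} [L.Structure M]

theorem isElementary_substructureReduct {L' : FirstOrder.Language} [L'.Structure M]
    (φ : L →ᴸ L') [φ.IsExpansionOn M] {S : L'.Substructure M} (hS : S.IsElementary) :
    (φ.substructureReduct S).IsElementary := by
  intro n ψ v
  let : L.Structure S := (φ.substructureReduct S).inducedStructure
  have : φ.IsExpansionOn S :=
    ⟨fun f y => Subtype.ext (φ.map_onFunction (M := M) f _),
      fun R y => φ.map_onRelation (M := M) R _⟩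
  calc ψ.Realize (((↑) : S → M) ∘ v)
      ↔ (φ.onFormula ψ).Realize (((↑) : S → M) ∘ v) := (φ.realize_onFormula ψ).symm
    _ ↔ (φ.onFormula ψ).Realize (M := S) v := hS (φ.onFormula ψ) v
    _ ↔ ψ.Realize (M := S) v := φ.realize_onFormula ψ

/-- The function symbols of `unaryLanguage ι`: one unary symbol for each `i : ι`. -/
inductive UnaryFunction (ι : Type x) : ℕ → Type x
  | of (i : ι) : UnaryFunction ι 1

/-- The language whose only symbols are unary function symbols indexed by `ι`, used to express
closure of a substructure under a family of self-maps. -/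
def unaryLanguage (ι : Type x) : FirstOrder.Language.{x, 0} := ⟨UnaryFunction ι, fun _ => Empty⟩

theorem card_unaryLanguage (ι : Type x) : (unaryLanguage ι).card = #ι :=
  mk_congr
    { toFun := fun | .inl ⟨_, .of i⟩ => i
      invFun := fun i => .inl ⟨1, .of i⟩
      left_inv := by rintro (⟨_, ⟨⟩⟩ | ⟨_, ⟨⟩⟩); rfl
      right_inv := fun _ => rfl }

/-- The structure on `M` interpreting the symbol `i` of `unaryLanguage ι` as `F i`. -/
@[reducible] def unaryStructure {ι : Type x} (F : ι → M → M) : (unaryLanguage ι).Structure M where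
  funMap := fun | .of i => fun y => F i (y 0)
  RelMap r := Empty.elim r

theorem exists_elementarySubstructure_mapsTo {ι : Type w} (F : ι → M → M) (s : Set M)
    {κ : Cardinal.{w}} (hκ : ℵ₀ ≤ κ) (hs : #s ≤ κ) (hL : lift.{w} L.card ≤ lift.{max u v} κ)
    (hι : #ι ≤ κ) (hM : κ ≤ #M) :
    ∃ S : L.ElementarySubstructure M, s ⊆ S ∧ #S = κ ∧ ∀ i, MapsTo (F i) S S := by
  let := unaryStructure F
  let L' := L.sum (unaryLanguage ι)
  have hL' : lift.{w} L'.card ≤ lift.{max (max u w) v} κ := by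
    rw [FirstOrder.Language.card_sum, card_unaryLanguage, lift_add]
    refine add_le_of_le (aleph0_le_lift.2 hκ) ?_ ?_
    · simpa only [lift_lift] using lift_le.{w}.2 hL
    · simpa only [lift_lift] using lift_le.{max u v w}.2 hι
  obtain ⟨S, hsS, hSκ⟩ :=
    exists_elementarySubstructure_card_eq L' s κ hκ (lift_le.2 hs) hL' (lift_le.2 hM)
  refine ⟨⟨(LHom.sumInl : L →ᴸ L').substructureReduct S,
    isElementary_substructureReduct _ S.isElementary⟩, hsS, lift_injective hSκ, fun i y hy => ?_⟩
  let f : (unaryLanguage ι).Functions 1 := .of i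
  exact S.toSubstructure.fun_mem (LHom.sumInr.onFunction f) (fun _ => y) fun _ => hy

theorem exists_isLowerSet_elementarySubstructure [Preorder M] (s : Set M) {κ : Cardinal.{w}}
    (hκ : ℵ₀ ≤ κ) (hs : #s ≤ κ) (hL : lift.{w} L.card ≤ lift.{max u v} κ) (hM : κ ≤ #M)
    (hIic : ∀ a : M, #(Iic a) ≤ κ) :
    ∃ S : L.ElementarySubstructure M, s ⊆ S ∧ #S = κ ∧ IsLowerSet (S : Set M) := by
  have enum (a : M) : ∃ f : κ.out → Iic a, f.Surjective := by
    have : Nonempty (Iic a) := ⟨a, self_mem_Iic⟩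
    obtain ⟨e⟩ : #(Iic a) ≤ #κ.out := (hIic a).trans_eq κ.mk_out.symm
    exact ⟨_, Function.invFun_surjective e.injective⟩
  choose f hf using enum
  obtain ⟨S, hsS, hSκ, hS⟩ := exists_elementarySubstructure_mapsTo (L := L)
    (fun i a => (f a i : M)) s hκ hs hL κ.mk_out.le hM
  refine ⟨S, hsS, hSκ, fun a b hba ha => ?_⟩
  obtain ⟨i, hi⟩ := hf a ⟨b, hba⟩
  simpa only [hi] using hS i ha

theorem exists_gt_elementarySubstructure_eq_Iio [LinearOrder M] [WellFoundedLT M]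
    {κ : Cardinal.{w}} (hκ : ℵ₀ ≤ κ) (hL : lift.{w} L.card ≤ lift.{max u v} κ) (hM : κ < #M)
    (hIic : ∀ a : M, #(Iic a) ≤ κ) (a : M) :
    ∃ b > a, ∃ S : L.ElementarySubstructure M, (S : Set M) = Iio b := by
  obtain ⟨S, haS, hSκ, hS⟩ := exists_isLowerSet_elementarySubstructure (L := L) {a} hκ
    ((mk_singleton a).trans_le (one_le_aleph0.trans hκ)) hL hM.le hIic
  obtain hSM | ⟨b, hSb⟩ := hS.eq_univ_or_Iio
  · have hcard : #S = #M := (congrArg (fun A : Set M => #A) hSM).trans mk_univ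
    exact absurd (hcard.symm.trans hSκ) hM.ne'
  · exact ⟨b, by simpa [hSb] using haS, S, hSb⟩

end LowenheimSkolem

theorem lt_mk_of_isCofinal {M : Type w} [Preorder M] {T : Set M} (hT : IsCofinal T)
    {κ : Cardinal.{w}} (hκ : ℵ₀ ≤ κ) (hM : κ < #M) (hIic : ∀ a : M, #(Iic a) ≤ κ) : κ < #T := by
  by_contra! hTκ
  have hcover : (⋃ t : T, Iic (t : M)) = Set.univ := eq_univ_of_forall fun a =>
    have ⟨t, ht, hat⟩ := hT a
    mem_iUnion.2 ⟨⟨t, ht⟩, hat⟩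
  refine hM.not_ge ?_
  calc #M = #(⋃ t : T, Iic (t : M)) := by rw [hcover, mk_univ]
    _ ≤ sum fun t : T => #(Iic (t : M)) := mk_iUnion_le_sum_mk
    _ ≤ sum fun _ : T => κ := sum_le_sum _ _ fun t => hIic t
    _ = #T * κ := sum_const' _ _
    _ ≤ κ := mul_le_of_le hκ hTκ le_rfl

theorem exists_strictMono_of_mk_lt {α β : Type w} [LinearOrder α] [WellFoundedLT α]
    [LinearOrder β] [WellFoundedLT β] (h : #α < #β) : ∃ f : α → β, StrictMono f :=
  match InitialSeg.total (α := α) (β := β) (· < ·) (· < ·) with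
  | .inl f => ⟨f, fun _ _ => f.map_rel_iff.2⟩
  | .inr f => absurd (mk_le_of_injective f.injective) h.not_ge

section SuccessorCardinal

variable {μ : Cardinal.{u}}

theorem lift_lt_mk_ord_succ (μ : Cardinal.{u}) :
    lift.{u + 1} μ < #{x : Ordinal.{u} // x < (succ μ).ord} :=
  calc lift.{u + 1} μ < lift.{u + 1} (succ μ) := lift_lt.2 (lt_succ μ)
    _ = lift.{u + 1} (succ μ).ord.card := by rw [card_ord]
    _ = #(Iio (succ μ).ord) := (mk_Iio_ordinal _).symm

theorem mk_Iic_ord_succ_le (hμ : ℵ₀ ≤ μ) (a : {x : Ordinal.{u} // x < (succ μ).ord}) :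
    #(Iic a) ≤ lift.{u + 1} μ := by
  have ha : succ a.1 < (succ μ).ord := (isSuccLimit_ord (hμ.trans (le_succ μ))).succ_lt a.2
  calc #(Iic a) = #(Subtype.val '' Iic a) := (mk_image_eq Subtype.val_injective).symm
    _ ≤ #(Iio (succ a.1)) := mk_le_mk_of_subset <| by
        rintro _ ⟨y, hy : y.1 ≤ a.1, rfl⟩
        exact Order.lt_succ_of_le hy
    _ = lift.{u + 1} (succ a.1).card := mk_Iio_ordinal _
    _ ≤ lift.{u + 1} μ := lift_le.2 (Order.lt_succ_iff.1 (lt_ord.1 ha))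

end SuccessorCardinal

section ElemSub

variable {C : ∀ k : ℕ, ordLang.Formula (Fin k) → Prop} {le1 le2 : Ordinal.{u} → Ordinal.{u} → Prop}
  {a b c : Ordinal.{u}}

theorem card_ordLang_le_aleph0 : ordLang.card ≤ ℵ₀ := by
  have hrel : Finite (Σ n, ordLang.Relations n) :=
    .of_surjective (![⟨2, .le⟩, ⟨2, .le1⟩, ⟨2, .le2⟩] : Fin 3 → Σ n, ordRel n) <| by
      rintro ⟨_, _ | _ | _⟩
      exacts [⟨0, rfl⟩, ⟨1, rfl⟩, ⟨2, rfl⟩]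
  have hfun : IsEmpty (Σ n, ordLang.Functions n) := ⟨fun f => Empty.elim f.2⟩
  exact mk_le_aleph0 (α := ordLang.Symbols)

theorem ElemSub.of_common_extension (hac : ElemSub C le1 le2 a c) (hbc : ElemSub C le1 le2 b c)
    (hab : a ≤ b) : ElemSub C le1 le2 a b :=
  ⟨hab, fun k φ hφ v =>
    (hac.2 k φ hφ v).trans (hbc.2 k φ hφ fun j => ⟨v j, (v j).2.trans_le hab⟩).symm⟩

theorem ElemSub.of_elementarySubstructure (hab : a ≤ b) :
    letI := segStr le1 le2 b
    ∀ S : ordLang.ElementarySubstructure {x : Ordinal // x < b},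
      (S : Set {x : Ordinal // x < b}) = {x | x.1 < a} → ElemSub C le1 le2 a b := by
  intro S hS
  let := segStr le1 le2 b
  let := segStr le1 le2 a
  let e : {x : Ordinal // x < a} ≃[ordLang] S :=
    { toFun y := ⟨⟨y, y.2.trans_le hab⟩, hS.ge y.2⟩
      invFun y := ⟨y, hS.le y.2⟩
      left_inv _ := rfl
      right_inv _ := rfl
      map_fun' f := Empty.elim f
      map_rel' r _ := by cases r <;> exact Iff.rfl }
  exact ⟨hab, fun _ φ _ v => ((S.subtype.comp e.toElementaryEmbedding).map_formula φ v).symm⟩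

theorem isCofinal_setOf_elemSub_ord_succ {μ : Cardinal.{u}} (hμ : ℵ₀ ≤ μ) :
    IsCofinal {a : {x : Ordinal.{u} // x < (succ μ).ord} |
      ElemSub C le1 le2 a (succ μ).ord} := by
  intro a
  let := segStr le1 le2 (succ μ).ord
  have hμ' : ℵ₀ ≤ lift.{u + 1} μ := aleph0_le_lift.2 hμ
  have hL : lift.{u + 1} ordLang.card ≤ lift.{0} (lift.{u + 1} μ) :=
    (lift_le_aleph0.2 card_ordLang_le_aleph0).trans (aleph0_le_lift.2 hμ')
  obtain ⟨b, hab, S, hS⟩ := exists_gt_elementarySubstructure_eq_Iio (L := ordLang) hμ' hL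
    (lift_lt_mk_ord_succ μ) (mk_Iic_ord_succ_le hμ) a
  exact ⟨b, .of_elementarySubstructure b.2.le S hS, hab.le⟩

end ElemSub

theorem stmt15_general {C : ∀ k : ℕ, ordLang.Formula (Fin k) → Prop}
    {le1 le2 : Ordinal.{u} → Ordinal.{u} → Prop} (h : ∀ a b, ElemSub C le1 le2 a b → le2 a b)
    (γ : Ordinal.{u}) :
    ∃ β : Iio γ → Ordinal.{u}, ∀ i j, i < j → Lt2 le2 (β i) (β j) := by
  let μ := max ℵ₀ γ.card
  have hμ : ℵ₀ ≤ μ := le_max_left _ _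
  let T := {a : {x : Ordinal.{u} // x < (succ μ).ord} | ElemSub C le1 le2 a (succ μ).ord}
  have hγT : #(Iio γ) < #T :=
    calc #(Iio γ) = lift.{u + 1} γ.card := mk_Iio_ordinal γ
      _ ≤ lift.{u + 1} μ := lift_le.2 (le_max_right _ _)
      _ < #T := lt_mk_of_isCofinal (isCofinal_setOf_elemSub_ord_succ hμ) (aleph0_le_lift.2 hμ)
        (lift_lt_mk_ord_succ μ) (mk_Iic_ord_succ_le hμ)
  obtain ⟨β, hβ⟩ := exists_strictMono_of_mk_lt hγT
  refine ⟨fun i => β i, fun i j hij => ?_⟩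
  have hlt : (β i : Ordinal) < β j := hβ hij
  exact ⟨h _ _ (.of_common_extension (β i).2 (β j).2 hlt.le), hlt.ne⟩

theorem stmt15 (le1 le2 : Ordinal → Ordinal → Prop) (h : IsR2Pair le1 le2) :
    ∀ n : ℕ, ∃ β : Fin n → Ordinal,
      ∀ (i : ℕ) (hi : i + 1 < n),
        Lt2 le2 (β ⟨i, Nat.lt_of_succ_lt hi⟩) (β ⟨i + 1, hi⟩) := by
  intro n
  obtain ⟨β, hβ⟩ := stmt15_general (fun a b => (h.2 a b).2) n
  exact ⟨fun i => β ⟨i.1, mem_Iio.2 (Nat.cast_lt.2 i.2)⟩,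
    fun i _ => hβ _ _ (Subtype.mk_lt_mk.2 (Nat.cast_lt.2 i.lt_succ_self))⟩
end

section
/- The ordinal 1^∞ is ≤₁-minimal and has no <₂-successor: there is no ordinal α < 1^∞ with α <₁ 1^∞, and there is no ordinal β with 1^∞ <₂ β. -/
open FirstOrder

/-! Write `ν` for `1^∞`. For each `n`, the existence of a `<₂`-chain with `n` links is a
Σ₁-sentence, so it is inherited downwards along `≤₁`; hence `α <₁ ν` would give `α` chains of every
length, against the minimality of `ν`.

Suppose `ν <₂ β`. Then `ν` is `≤₁` every ordinal of `[ν, β)`, so the Σ₂-sentence saying that some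
`x` is `≤₁` every `y ≥ x` holds below `β`, and therefore below `ν`. Let `x < ν` be a witness. The
top `y` of a chain with `n + 1` links below `ν` has a chain with `n` links below it, which also lies
below `x` if `y < x`, and which is inherited by `x` along `x ≤₁ y` otherwise. So `x` has chains of
every length, again against the minimality of `ν`. -/

open FirstOrder.Language

section FormulaClasses

variable {L : FirstOrder.Language} {α : Type} {n : ℕ}

theorem isQF_foldr_inf {l : List (L.BoundedFormula α n)} (hl : ∀ φ ∈ l, φ.IsQF) :
    (l.foldr (· ⊓ ·) ⊤).IsQF := by
  induction l with
  | nil => exact BoundedFormula.IsQF.top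
  | cons φ l ih =>
    rw [List.forall_mem_cons] at hl
    exact hl.1.inf (ih hl.2)

theorem isQF_iInf {ι : Type*} [Finite ι] {f : ι → L.BoundedFormula α n} (hf : ∀ i, (f i).IsQF) :
    (BoundedFormula.iInf f).IsQF :=
  isQF_foldr_inf (List.forall_mem_map.2 fun i _ => hf i)

theorem IsSigma1.isExistential {φ : L.BoundedFormula α n} (hφ : IsSigma1 φ) :
    φ.IsExistential := by
  induction hφ with
  | of_isQF h => exact .of_isQF h
  | ex _ ih => exact .ex ih

theorem IsSigma1.isSigma2 {φ : L.BoundedFormula α n} (hφ : IsSigma1 φ) : IsSigma2 φ := by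
  induction hφ with
  | of_isQF h => exact .of_isPi1 (.of_isQF h)
  | ex _ ih => exact .ex ih

theorem IsSigma1.exs {φ : L.BoundedFormula α n} (hφ : IsSigma1 φ) : IsSigma1 φ.exs := by
  induction n with
  | zero => exact hφ
  | succ n ih => exact ih hφ.ex

end FormulaClasses

section Chains

variable {X : Type*} [Preorder X] {r : X → X → Prop} {n : ℕ} {a b : X}

/-- Below `a` there is an `r`-chain with `n` links, that is, with `n + 1` elements. Counting links
rather than elements makes the consecutive pairs those of the form `i.castSucc`, `i.succ`. -/
def HasChainBelow (r : X → X → Prop) (n : ℕ) (a : X) : Prop :=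
  ∃ c : Fin (n + 1) → X, (∀ i, c i < a) ∧ ∀ i : Fin n, r (c i.castSucc) (c i.succ)

theorem HasChainBelow.mono (hab : a ≤ b) : HasChainBelow r n a → HasChainBelow r n b :=
  fun ⟨c, hca, hc⟩ => ⟨c, fun i => (hca i).trans_le hab, hc⟩

theorem HasChainBelow.exists_lt (hr : ∀ x y, r x y → x < y) (h : HasChainBelow r (n + 1) a) :
    ∃ b < a, HasChainBelow r n b := by
  obtain ⟨c, hca, hc⟩ := h
  have c_strictMono : StrictMono c := Fin.strictMono_iff_lt_succ.2 fun i => hr _ _ (hc i)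
  exact ⟨c (Fin.last _), hca _, fun i => c i.castSucc,
    fun i => c_strictMono (Fin.castSucc_lt_last i), fun i => hc i.castSucc⟩

end Chains

section OneInfty

variable {le2 : Ordinal → Ordinal → Prop}

theorem oneInfty_eq_sInf :
    OneInfty le2 = sInf {ν | ∀ n, HasChainBelow (Lt2 le2) n ν} := by
  refine congrArg sInf (Set.ext fun ν => ⟨fun hν n => ?_, fun hν n => ?_⟩)
  · obtain ⟨c, hcν, hc⟩ := hν (n + 1)
    exact ⟨c, hcν, fun i => hc i (Nat.succ_lt_succ i.2)⟩
  · cases n with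
    | zero => exact ⟨Fin.elim0, fun i => i.elim0, fun _ hi => absurd hi (Nat.not_lt_zero _)⟩
    | succ n =>
      obtain ⟨c, hcν, hc⟩ := hν n
      exact ⟨c, hcν, fun i hi => hc ⟨i, Nat.lt_of_succ_lt_succ hi⟩⟩

theorem oneInfty_le {ν : Ordinal} (hν : ∀ n, HasChainBelow (Lt2 le2) n ν) : OneInfty le2 ≤ ν :=
  oneInfty_eq_sInf.trans_le (csInf_le' hν)

theorem hasChainBelow_oneInfty (h0 : OneInfty le2 ≠ 0) (n : ℕ) :
    HasChainBelow (Lt2 le2) n (OneInfty le2) := by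
  rw [oneInfty_eq_sInf] at h0 ⊢
  -- The infimum of the empty set is `0`, so a nonzero infimum is attained.
  have hne : {ν | ∀ n, HasChainBelow (Lt2 le2) n ν}.Nonempty :=
    Set.nonempty_iff_ne_empty.2 fun hempty => h0 (by rw [hempty, Ordinal.sInf_empty])
  exact csInf_mem hne n

end OneInfty

section Segments

variable {le1 le2 : Ordinal → Ordinal → Prop} {a b c : Ordinal}

/-- The inclusion of the segment below `a` into the segment below `b`, as an embedding of
`ordLang`-structures; it transports existential formulas upwards. -/
def segEmbedding (le1 le2 : Ordinal → Ordinal → Prop) (hab : a ≤ b) :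
    letI := segStr le1 le2 a
    letI := segStr le1 le2 b
    {x // x < a} ↪[ordLang] {x // x < b} :=
  letI := segStr le1 le2 a
  letI := segStr le1 le2 b
  { toFun := fun x => ⟨x, x.2.trans_le hab⟩
    inj' := fun _ _ hxy => Subtype.ext (Subtype.mk.inj hxy)
    map_fun' := fun f => Empty.elim f
    map_rel' := fun R _ => by cases R <;> exact Iff.rfl }

theorem RealizeIn.mono {k : ℕ} {φ : ordLang.Formula (Fin k)} {v : Fin k → {x // x < a}}
    (hφ : IsSigma1 φ) (hab : a ≤ b) (h : RealizeIn le1 le2 a φ v) :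
    RealizeIn le1 le2 b φ fun j => ⟨v j, (v j).2.trans_le hab⟩ := by
  let := segStr le1 le2 a
  let := segStr le1 le2 b
  have realize_image := hφ.isExistential.realize_embedding (segEmbedding le1 le2 hab) h
  rwa [Subsingleton.elim (segEmbedding le1 le2 hab ∘ default) default] at realize_image

theorem ElemSub.anti {C D : ∀ k : ℕ, ordLang.Formula (Fin k) → Prop}
    (hCD : ∀ k φ, C k φ → D k φ) : ElemSub D le1 le2 a b → ElemSub C le1 le2 a b :=
  fun ⟨hab, hD⟩ => ⟨hab, fun k φ hφ => hD k φ (hCD k φ hφ)⟩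

theorem ElemSub.of_le_of_le (hac : ElemSub (fun _ φ => IsSigma1 φ) le1 le2 a c)
    (hab : a ≤ b) (hbc : b ≤ c) : ElemSub (fun _ φ => IsSigma1 φ) le1 le2 a b :=
  ⟨hab, fun k φ hφ v =>
    ⟨fun ha => ha.mono hφ hab, fun hb => (hac.2 k φ hφ v).2 (hb.mono hφ hbc)⟩⟩

end Segments

section Sentences

variable {le1 le2 : Ordinal → Ordinal → Prop} {a : Ordinal}

/-- The Σ₁-sentence stating that there is a `<₂`-chain with `n` links. -/
noncomputable def chainFormula (n : ℕ) : ordLang.Formula (Fin 0) :=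
  BoundedFormula.exs (n := n + 1) <| BoundedFormula.iInf fun i : Fin n =>
    Relations.boundedFormula₂ (L := ordLang) ordRel.le2 (&i.castSucc) (&i.succ) ⊓
      ∼(Term.bdEqual (&i.castSucc) (&i.succ))

theorem isSigma1_chainFormula (n : ℕ) : IsSigma1 (chainFormula n) :=
  .exs <| .of_isQF <| isQF_iInf fun _ =>
    (BoundedFormula.IsAtomic.rel _ _).isQF.inf (BoundedFormula.IsAtomic.equal _ _).isQF.not

theorem realizeIn_chainFormula {n : ℕ} {v : Fin 0 → {x // x < a}} :
    RealizeIn le1 le2 a (chainFormula n) v ↔ HasChainBelow (Lt2 le2) n a := by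
  let := segStr le1 le2 a
  have realize_iff : RealizeIn le1 le2 a (chainFormula n) v ↔
      ∃ c : Fin (n + 1) → {x // x < a}, ∀ i : Fin n, Lt2 le2 (c i.castSucc) (c i.succ) := by
    simp only [RealizeIn, chainFormula, BoundedFormula.realize_exs, BoundedFormula.realize_iInf,
      BoundedFormula.realize_inf, BoundedFormula.realize_not, BoundedFormula.realize_bdEqual,
      Lt2, ne_eq, ← Subtype.ext_iff]
    rfl
  rw [realize_iff]
  exact ⟨fun ⟨c, hc⟩ => ⟨fun i => c i, fun i => (c i).2, hc⟩,
    fun ⟨c, hca, hc⟩ => ⟨fun i => ⟨c i, hca i⟩, hc⟩⟩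

/-- The Σ₂-sentence stating that some `x` satisfies `x ≤₁ y` for all `y ≥ x`. -/
def le1TailFormula : ordLang.Formula (Fin 0) :=
  ∃' ∀' (Relations.boundedFormula₂ (L := ordLang) (n := 2) ordRel.le (&0) (&1) ⟹
    Relations.boundedFormula₂ (L := ordLang) ordRel.le1 (&0) (&1))

theorem isSigma2_le1TailFormula : IsSigma2 le1TailFormula :=
  .ex <| .of_isPi1 <| .all <| .of_isQF <|
    (BoundedFormula.IsAtomic.rel _ _).isQF.imp (BoundedFormula.IsAtomic.rel _ _).isQF

theorem realizeIn_le1TailFormula {v : Fin 0 → {x // x < a}} :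
    RealizeIn le1 le2 a le1TailFormula v ↔ ∃ x < a, ∀ y < a, x ≤ y → le1 x y := by
  let := segStr le1 le2 a
  have realize_iff : RealizeIn le1 le2 a le1TailFormula v ↔
      ∃ x : {x // x < a}, ∀ y : {y // y < a}, x.1 ≤ y.1 → le1 x y := by
    simp only [RealizeIn, le1TailFormula, Formula.Realize, BoundedFormula.realize_ex,
      BoundedFormula.realize_all, BoundedFormula.realize_imp]
    rfl
  rw [realize_iff]
  simp only [Subtype.exists, Subtype.forall, exists_prop]

end Sentences

namespace IsR2Pair

variable {le1 le2 : Ordinal → Ordinal → Prop} {a b c : Ordinal} {n : ℕ}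

theorem le1_of_le2 (h : IsR2Pair le1 le2) (hab : le2 a b) : le1 a b :=
  (h.1 a b).2 (((h.2 a b).1 hab).anti fun _ _ hφ => hφ.isSigma2)

theorem le1_of_le1_of_le_of_le (h : IsR2Pair le1 le2) (hac : le1 a c) (hab : a ≤ b)
    (hbc : b ≤ c) : le1 a b :=
  (h.1 a b).2 (((h.1 a c).1 hac).of_le_of_le hab hbc)

theorem lt_of_lt2 (h : IsR2Pair le1 le2) (hab : Lt2 le2 a b) : a < b :=
  ((h.2 a b).1 hab.1).1.lt_of_ne hab.2

theorem hasChainBelow_of_le1 (h : IsR2Pair le1 le2) (hab : le1 a b)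
    (hb : HasChainBelow (Lt2 le2) n b) : HasChainBelow (Lt2 le2) n a := by
  obtain ⟨_, elem⟩ := (h.1 a b).1 hab
  have transfer := elem 0 (chainFormula n) (isSigma1_chainFormula n) Fin.elim0
  rw [realizeIn_chainFormula, realizeIn_chainFormula] at transfer
  exact transfer.2 hb

theorem exists_forall_le1_of_lt2 (h : IsR2Pair le1 le2) (hab : Lt2 le2 a b) :
    ∃ x < a, ∀ y < a, x ≤ y → le1 x y := by
  obtain ⟨_, elem⟩ := (h.2 a b).1 hab.1
  have transfer := elem 0 le1TailFormula isSigma2_le1TailFormula Fin.elim0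
  rw [realizeIn_le1TailFormula, realizeIn_le1TailFormula] at transfer
  exact transfer.2 ⟨a, h.lt_of_lt2 hab, fun y hyb hay =>
    h.le1_of_le1_of_le_of_le (h.le1_of_le2 hab.1) hay hyb.le⟩

theorem hasChainBelow_of_forall_le1 (h : IsR2Pair le1 le2) (hab : ∀ y < b, a ≤ y → le1 a y)
    (hb : HasChainBelow (Lt2 le2) (n + 1) b) : HasChainBelow (Lt2 le2) n a := by
  obtain ⟨y, hyb, hy⟩ := hb.exists_lt fun _ _ => h.lt_of_lt2
  obtain hya | hay := lt_or_ge y a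
  · exact hy.mono hya.le
  · exact h.hasChainBelow_of_le1 (hab y hyb hay) hy

end IsR2Pair

theorem stmt16 (le1 le2 : Ordinal → Ordinal → Prop) (h : IsR2Pair le1 le2) :
    (∀ α : Ordinal, α < OneInfty le2 → ¬ Lt1 le1 α (OneInfty le2)) ∧
    (∀ β : Ordinal, ¬ Lt2 le2 (OneInfty le2) β) := by
  refine ⟨fun α hα hlt => ?_, fun β hlt => ?_⟩
  · have chains_α : ∀ n, HasChainBelow (Lt2 le2) n α := fun n =>
      h.hasChainBelow_of_le1 hlt.1 (hasChainBelow_oneInfty hα.ne_bot n)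
    exact (oneInfty_le chains_α).not_gt hα
  · obtain ⟨x, hx, le1_tail⟩ := h.exists_forall_le1_of_lt2 hlt
    have chains_x : ∀ n, HasChainBelow (Lt2 le2) n x := fun n =>
      h.hasChainBelow_of_forall_le1 le1_tail (hasChainBelow_oneInfty hx.ne_bot (n + 1))
    exact (oneInfty_le chains_x).not_gt hx
end
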